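/- Let v, w, v', w' ∈ V_+ with dist(v,w) = dist(v',w'). Then for all m, n ∈ ℕ the finite sets {u ∈ V_+ : dist(v,u) = m and dist(u,w) = n} and {u ∈ V_+ : dist(v',u) = m and dist(u,w') = n} have the same cardinality; in particular, #{u ∈ V_+ : dist(v,u) = m and dist(u,w) = n} = #{u ∈ V_+ : dist(v,u) = n and dist(u,w) = m}. -/

import Mathlib

open scoped BigOperators ComplexOrder

/-- A semi-homogeneous tree `T_{q_+,q_-}`: a connected acyclic simple graph with a
parity function `eps` (true = `+`, false = `−`) that flips across edges, in which every
vertex of parity `+` has exactly `qp + 1` neighbors and every vertex of parity `−` has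
exactly `qm + 1` neighbors.  Spheres are finite (this follows from local finiteness
and connectedness, and is recorded as a field for convenience). -/
structure SemiHomTree (qp qm : ℕ) (V : Type) where
  G : SimpleGraph V
  connected : G.Connected
  acyclic : G.IsAcyclic
  eps : V → Bool
  adj_parity : ∀ ⦃v w : V⦄, G.Adj v w → eps w = !eps v
  nbr_finite : ∀ v : V, {w : V | G.Adj v w}.Finite
  degree_plus : ∀ v : V, eps v = true → {w : V | G.Adj v w}.ncard = qp + 1
  degree_minus : ∀ v : V, eps v = false → {w : V | G.Adj v w}.ncard = qm + 1
  sphere_finite : ∀ (v : V) (n : ℕ), {w : V | G.dist v w = n}.Finite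

/-- The averaging operator `M_n`: average of `f` over the sphere of radius `n` around `v`. -/
noncomputable def Mop {qp qm : ℕ} {V : Type} (T : SemiHomTree qp qm V)
    (n : ℕ) (f : V → ℂ) (v : V) : ℂ :=
  (({w : V | T.G.dist v w = n}.ncard : ℂ))⁻¹ * ∑ᶠ w ∈ {w : V | T.G.dist v w = n}, f w

/-- The Laplace operator `μ₁`: the average of `f` over the neighbors of `v`. -/
noncomputable def lap {qp qm : ℕ} {V : Type} (T : SemiHomTree qp qm V)
    (f : V → ℂ) (v : V) : ℂ :=
  (((if T.eps v then qp else qm : ℕ) : ℂ) + 1)⁻¹ * ∑ᶠ w ∈ {w : V | T.G.Adj v w}, f w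

/-!
A kernel `K : V → V → M` on the tree is *radial* if `K v w` depends only on the parity of `v` and
on `dist v w`. Let `A` be the sum over neighbours and `S m` the sum over the sphere of radius `m`,
both acting on the first variable. Counting the neighbours of a vertex by their distance to a given
point gives `A (S (m + 1)) = S (m + 2) + c m • S m`, where `c m` depends only on the degree and on
whether `m = 0`. As `A` preserves radial kernels, two-step induction on `m` and cancellation show
that every `S m` does. The intersection numbers of spheres arise by applying `S m` to the indicator
kernel of a sphere.
-/

section Acyclic

variable {V M : Type*} [AddCommMonoid M] {G : SimpleGraph V} {u v : V} {n : ℕ}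

theorem dist_eq_dist_add_one_or_of_adj (hG : G.IsAcyclic) {x : V} (hvx : G.Adj v x)
    (hvu : G.Reachable v u) :
    G.dist v u = G.dist x u + 1 ∨ G.dist x u = G.dist v u + 1 := by
  simpa only [G.dist_comm (u := u)] using
    hG.dist_eq_dist_add_one_of_adj_of_reachable u hvx hvu.symm

theorem existsUnique_adj_dist_eq (hG : G.IsAcyclic) (h : G.dist v u = n + 1) :
    ∃! x, G.Adj v x ∧ G.dist x u = n := by
  have cons_isPath {x : V} (hvx : G.Adj v x) (p : G.Walk x u) (hp : p.length = n) :
      (p.cons hvx).IsPath :=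
    SimpleGraph.Walk.isPath_of_length_eq_dist _ (by simp [hp, h])
  have hvu : G.Reachable v u := .of_dist_ne_zero (h.trans_ne n.succ_ne_zero)
  obtain ⟨p, hp⟩ := hvu.exists_walk_length_eq_dist
  cases p with
  | nil => simp at h
  | @cons _ x _ hvx p =>
    have hp_length : p.length = n := by simpa [h] using hp
    have hx_dist : G.dist x u = n := by
      have := dist_eq_dist_add_one_or_of_adj hG hvx hvu
      have := G.dist_le p
      omega
    refine ⟨x, ⟨hvx, hx_dist⟩, fun y ⟨hvy, hy_dist⟩ => ?_⟩
    obtain ⟨q, hq⟩ := (hvy.symm.reachable.trans hvu).exists_walk_length_eq_dist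
    have hpaths : p.cons hvx = q.cons hvy :=
      congrArg Subtype.val ((hG.subsingleton_path v u).elim ⟨_, cons_isPath hvx p hp_length⟩
        ⟨_, cons_isPath hvy q (hq.trans hy_dist)⟩)
    simpa using (congrArg SimpleGraph.Walk.snd hpaths).symm

theorem sum_neighborFinset_dist_self [Fintype (G.neighborSet v)] (f : ℕ → M) :
    ∑ x ∈ G.neighborFinset v, f (G.dist x v) = G.degree v • f 1 := by
  refine Finset.sum_eq_card_nsmul fun x hx => ?_
  rw [SimpleGraph.dist_eq_one_iff_adj.2 ((G.mem_neighborFinset v x).1 hx).symm]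

theorem sum_neighborFinset_dist [Fintype (G.neighborSet v)] (hG : G.IsAcyclic)
    (h : G.dist v u = n + 1) (f : ℕ → M) :
    ∑ x ∈ G.neighborFinset v, f (G.dist x u) = f n + (G.degree v - 1) • f (n + 2) := by
  classical
  obtain ⟨x, ⟨hvx, hx_dist⟩, hx_unique⟩ := existsUnique_adj_dist_eq hG h
  have hx_mem := (G.mem_neighborFinset v x).2 hvx
  rw [← Finset.add_sum_erase _ _ hx_mem, hx_dist, ← G.card_neighborFinset_eq_degree,
    ← Finset.card_erase_of_mem hx_mem]
  congr 1
  refine Finset.sum_eq_card_nsmul fun y hy => ?_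
  obtain ⟨hyx, hy_mem⟩ := Finset.mem_erase.1 hy
  have hvy := (G.mem_neighborFinset v y).1 hy_mem
  have hy_ne : G.dist y u ≠ n := fun hy_dist => hyx (hx_unique y ⟨hvy, hy_dist⟩)
  have := dist_eq_dist_add_one_or_of_adj hG hvy (.of_dist_ne_zero (h.trans_ne n.succ_ne_zero))
  congr 1
  omega

theorem card_neighborFinset_dist_pred [Fintype (G.neighborSet v)] (hG : G.IsAcyclic)
    (h : G.dist v u = n + 1) : {x ∈ G.neighborFinset v | G.dist x u = n}.card = 1 := by
  rw [Finset.card_filter]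
  simpa using sum_neighborFinset_dist (M := ℕ) hG h fun k => if k = n then 1 else 0

theorem card_neighborFinset_dist_succ [Fintype (G.neighborSet v)] (hG : G.IsTree)
    (h : G.dist v u = n) :
    {x ∈ G.neighborFinset v | G.dist x u = n + 1}.card = G.degree v - if n = 0 then 0 else 1 := by
  rw [Finset.card_filter]
  cases n with
  | zero =>
    obtain rfl := hG.connected.dist_eq_zero_iff.1 h
    simpa using
      sum_neighborFinset_dist_self (M := ℕ) (G := G) (v := v) fun k => if k = 1 then 1 else 0
  | succ n =>
    simpa using sum_neighborFinset_dist (M := ℕ) hG.isAcyclic h fun k => if k = n + 2 then 1 else 0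

theorem sum_neighborFinset_dist_congr {v' u' : V} [Fintype (G.neighborSet v)]
    [Fintype (G.neighborSet v')] (hG : G.IsTree) (hdeg : G.degree v = G.degree v')
    (hd : G.dist v u = G.dist v' u') (f : ℕ → M) :
    ∑ x ∈ G.neighborFinset v, f (G.dist x u) = ∑ x ∈ G.neighborFinset v', f (G.dist x u') := by
  cases h : G.dist v u with
  | zero =>
    obtain rfl := hG.connected.dist_eq_zero_iff.1 h
    obtain rfl := hG.connected.dist_eq_zero_iff.1 (hd.symm.trans h)
    rw [sum_neighborFinset_dist_self, sum_neighborFinset_dist_self, hdeg]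
  | succ n =>
    rw [sum_neighborFinset_dist hG.isAcyclic h,
      sum_neighborFinset_dist hG.isAcyclic (hd.symm.trans h), hdeg]

end Acyclic

namespace SemiHomTree

variable {qp qm : ℕ} {V : Type} (T : SemiHomTree qp qm V)

theorem isTree : T.G.IsTree := ⟨T.connected, T.acyclic⟩

noncomputable instance (v : V) : Fintype (T.G.neighborSet v) := (T.nbr_finite v).fintype

theorem degree_congr {v v' : V} (hε : T.eps v = T.eps v') : T.G.degree v = T.G.degree v' := by
  have degree_eq_ncard (x : V) : T.G.degree x = {y | T.G.Adj x y}.ncard := by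
    rw [← T.G.card_neighborSet_eq_degree, ← Nat.card_eq_fintype_card]
    rfl
  rw [degree_eq_ncard, degree_eq_ncard]
  cases h : T.eps v with
  | true => rw [T.degree_plus v h, T.degree_plus v' (hε.symm.trans h)]
  | false => rw [T.degree_minus v h, T.degree_minus v' (hε.symm.trans h)]

/-- The sphere of radius `n` around `v`, as a finset so that sums over it are finite sums. -/
noncomputable def sphere (v : V) (n : ℕ) : Finset V := (T.sphere_finite v n).toFinset

@[simp]
theorem mem_sphere {u v : V} {n : ℕ} : u ∈ T.sphere v n ↔ T.G.dist v u = n := by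
  simp [sphere]

@[simp]
theorem sphere_zero (v : V) : T.sphere v 0 = {v} := by
  ext u
  simp [T.connected.dist_eq_zero_iff, eq_comm]

@[simp]
theorem sphere_one (v : V) : T.sphere v 1 = T.G.neighborFinset v := by
  ext u
  simp

theorem disjoint_sphere (v : V) {m n : ℕ} (h : m ≠ n) :
    Disjoint (T.sphere v m) (T.sphere v n) :=
  Finset.disjoint_left.2 fun _ hm hn => h ((T.mem_sphere.1 hm).symm.trans (T.mem_sphere.1 hn))

theorem sum_neighborFinset_sum_sphere {M : Type*} [AddCommMonoid M] (f : V → M) (v : V) (m : ℕ) :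
    ∑ x ∈ T.G.neighborFinset v, ∑ u ∈ T.sphere x (m + 1), f u =
      ∑ u ∈ T.sphere v (m + 2), f u +
        (T.G.degree v - if m = 0 then 0 else 1) • ∑ u ∈ T.sphere v m, f u := by
  classical
  have mem_iff (x u : V) : x ∈ T.G.neighborFinset v ∧ u ∈ T.sphere x (m + 1) ↔
      x ∈ {x ∈ T.G.neighborFinset v | T.G.dist x u = m + 1} ∧
        u ∈ T.sphere v (m + 2) ∪ T.sphere v m := by
    simp only [SimpleGraph.mem_neighborFinset, mem_sphere, Finset.mem_filter, Finset.mem_union]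
    refine ⟨fun ⟨hvx, hxu⟩ => ⟨⟨hvx, hxu⟩, ?_⟩, And.left⟩
    have := dist_eq_dist_add_one_or_of_adj T.acyclic hvx (T.connected v u)
    omega
  rw [Finset.sum_comm' mem_iff, Finset.sum_union (T.disjoint_sphere v (by omega)), Finset.smul_sum]
  congr 1 <;> refine Finset.sum_congr rfl fun u hu => ?_
  · rw [Finset.sum_const, card_neighborFinset_dist_pred T.acyclic (T.mem_sphere.1 hu), one_nsmul]
  · rw [Finset.sum_const, card_neighborFinset_dist_succ T.isTree (T.mem_sphere.1 hu)]

/-- A kernel on the vertices is radial if its value at `(v, w)` depends only on the distance and on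
the parity of `v`; the parity of `w` is then determined too. -/
def IsRadial {M : Type*} (K : V → V → M) : Prop :=
  ∀ ⦃v w v' w' : V⦄, T.eps v = T.eps v' → T.G.dist v w = T.G.dist v' w' → K v w = K v' w'

namespace IsRadial

variable {T} {M : Type*} {K : V → V → M}

theorem exists_eq [Nonempty M] (hK : T.IsRadial K) :
    ∃ φ : Bool → ℕ → M, ∀ v w, K v w = φ (T.eps v) (T.G.dist v w) := by
  have hfactor : Function.FactorsThrough (fun p : V × V => K p.1 p.2)
      fun p => (T.eps p.1, T.G.dist p.1 p.2) :=
    fun _ _ h => hK (Prod.ext_iff.1 h).1 (Prod.ext_iff.1 h).2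
  obtain ⟨φ, hφ⟩ := (Function.factorsThrough_iff _).1 hfactor
  exact ⟨Function.curry φ, fun v w => congrFun hφ (v, w)⟩

theorem sum_neighborFinset [AddCommMonoid M] (hK : T.IsRadial K) :
    T.IsRadial fun v w => ∑ x ∈ T.G.neighborFinset v, K x w := by
  obtain ⟨φ, hφ⟩ := hK.exists_eq
  have sum_eq (v w : V) : ∑ x ∈ T.G.neighborFinset v, K x w =
      ∑ x ∈ T.G.neighborFinset v, φ (!T.eps v) (T.G.dist x w) :=
    Finset.sum_congr rfl fun x hx => by
      rw [hφ, T.adj_parity ((T.G.mem_neighborFinset v x).1 hx)]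
  intro v w v' w' hε hd
  simp only [sum_eq, hε]
  exact sum_neighborFinset_dist_congr T.isTree (T.degree_congr hε) hd _

theorem sum_sphere [AddCancelCommMonoid M] (hK : T.IsRadial K) (m : ℕ) :
    T.IsRadial fun v w => ∑ u ∈ T.sphere v m, K u w := by
  induction m using Nat.twoStepInduction with
  | zero => simpa using hK
  | one => simpa using hK.sum_neighborFinset
  | more m ih ih_succ =>
    intro v w v' w' hε hd
    have hsum := ih_succ.sum_neighborFinset hε hd
    have hm : ∑ u ∈ T.sphere v m, K u w = ∑ u ∈ T.sphere v' m, K u w' := ih hε hd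
    simp only [sum_neighborFinset_sum_sphere] at hsum
    rw [T.degree_congr hε, hm] at hsum
    exact add_right_cancel hsum

end IsRadial

end SemiHomTree

theorem stmt_12_general {qp qm : ℕ} {V : Type} (T : SemiHomTree qp qm V) {v w v' w' : V}
    (hε : T.eps v = T.eps v') (hd : T.G.dist v w = T.G.dist v' w') (b : Bool) (m n : ℕ) :
    {u : V | T.eps u = b ∧ T.G.dist v u = m ∧ T.G.dist u w = n}.ncard =
      {u : V | T.eps u = b ∧ T.G.dist v' u = m ∧ T.G.dist u w' = n}.ncard := by
  let K (u w : V) : ℕ := if T.eps u = b ∧ T.G.dist u w = n then 1 else 0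
  have hK : T.IsRadial K := fun _ _ _ _ hε hd => by simp only [K, hε, hd]
  have ncard_eq_sum (v w : V) :
      {u : V | T.eps u = b ∧ T.G.dist v u = m ∧ T.G.dist u w = n}.ncard =
        ∑ u ∈ T.sphere v m, K u w := by
    rw [← Finset.card_filter, ← Set.ncard_coe_finset]
    congr 1
    ext u
    simp [and_left_comm]
  rw [ncard_eq_sum, ncard_eq_sum]
  exact hK.sum_sphere m hε hd

theorem stmt_12 {qp qm : ℕ} (hqp : 2 ≤ qp) (hqm : 2 ≤ qm) {V : Type}
    (T : SemiHomTree qp qm V) (v0 : V) (hv0 : T.eps v0 = true)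
    (v w v' w' : V) (hv : T.eps v = true) (hw : T.eps w = true)
    (hv' : T.eps v' = true) (hw' : T.eps w' = true)
    (hd : T.G.dist v w = T.G.dist v' w') :
    (∀ m n : ℕ,
      {u : V | T.eps u = true ∧ T.G.dist v u = m ∧ T.G.dist u w = n}.ncard =
        {u : V | T.eps u = true ∧ T.G.dist v' u = m ∧ T.G.dist u w' = n}.ncard) ∧
    (∀ m n : ℕ,
      {u : V | T.eps u = true ∧ T.G.dist v u = m ∧ T.G.dist u w = n}.ncard =
        {u : V | T.eps u = true ∧ T.G.dist v u = n ∧ T.G.dist u w = m}.ncard) := by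
  refine ⟨stmt_12_general T (hv.trans hv'.symm) hd true, fun m n => ?_⟩
  simpa only [T.G.dist_comm, and_comm] using
    stmt_12_general T (hv.trans hw.symm) T.G.dist_comm true m n
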